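/- Let f and g be symmetric simple-loop symbols of class SL^α with α ≥ 2, and for each n set h = 1/(n+1). Then there exists N ∈ ℕ such that for every n ≥ N the n eigenvalues of the Hermitian Toeplitz matrix T_n(f + h·g) are pairwise distinct, i.e. λ_1(T_n(f + h·g)) < λ_2(T_n(f + h·g)) < … < λ_n(T_n(f + h·g)). -/

import Mathlib

open MeasureTheory Filter Real Topology

noncomputable section

/-- The `k`-th Fourier coefficient of a (2π-periodic) function `u : ℝ → ℝ`. -/
def fCoeff (u : ℝ → ℝ) (k : ℤ) : ℂ :=
  (1 / (2 * (π : ℂ))) * ∫ θ in (0:ℝ)..(2*π), (u θ : ℂ) * Complex.exp (-Complex.I * (k : ℂ) * (θ : ℂ))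

/-- The `n × n` Toeplitz matrix generated by `u`. -/
def toeplitz (u : ℝ → ℝ) (n : ℕ) : Matrix (Fin n) (Fin n) ℂ :=
  Matrix.of fun i j => fCoeff u ((i : ℤ) - (j : ℤ))

/-- The eigenvalues of a Hermitian matrix, arranged in nondecreasing order. -/
def sortedEigs {n : ℕ} {A : Matrix (Fin n) (Fin n) ℂ} (hA : A.IsHermitian) : Fin n → ℝ :=
  hA.eigenvalues ∘ Tuple.sort hA.eigenvalues

/-- Cauchy principal value of `∫_0^{2π} u`, where `u` is singular (only) at `s` and `2π - s`. -/
def pvIntegral2 (u : ℝ → ℝ) (s : ℝ) : ℝ :=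
  limUnder (𝓝[>] (0:ℝ)) fun ε =>
    ∫ σ in Set.Icc (0:ℝ) (2*π) \ (Set.Ioo (s-ε) (s+ε) ∪ Set.Ioo (2*π-s-ε) (2*π-s+ε)), u σ

/-- The function `b_f(σ,s) = (f(σ) - f(s))/(2(cos s - cos σ))`, extended by continuity to the
points where `cos σ = cos s`. -/
def bSymb (f : ℝ → ℝ) (σ s : ℝ) : ℝ :=
  if Real.cos σ = Real.cos s then
    limUnder (𝓝[≠] σ) fun τ => (f τ - f s) / (2 * (Real.cos s - Real.cos τ))
  else (f σ - f s) / (2 * (Real.cos s - Real.cos σ))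

/-- The function `η_f`. -/
def etaF (f : ℝ → ℝ) (s : ℝ) : ℝ :=
  (Real.sin s / (2*π)) *
    pvIntegral2 (fun σ => Real.log (bSymb f σ s) / (Real.cos s - Real.cos σ)) s

/-- The function `ψ` associated with symbols `f` and `g`. -/
def psiF (f g : ℝ → ℝ) (s : ℝ) : ℝ :=
  (Real.sin s / (2*π)) *
    pvIntegral2 (fun σ => bSymb g σ s / (bSymb f σ s * (Real.cos s - Real.cos σ))) s

/-- The function `φ` associated with symbols `f` and `g`. -/
def phiF (f g : ℝ → ℝ) (s : ℝ) : ℝ :=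
  (Real.sin s / (2*π)) *
    pvIntegral2
      (fun σ => bSymb g σ s / ((bSymb f σ s + bSymb g σ s) * (Real.cos s - Real.cos σ))) s

/-- A symmetric simple-loop symbol of class `SL^α`. -/
structure IsSimpleLoop (α : ℝ) (f : ℝ → ℝ) : Prop where
  periodic : Function.Periodic f (2*π)
  smooth : ContDiff ℝ 2 f
  wiener : Summable fun k : ℤ => ‖fCoeff f k‖ * ((k.natAbs : ℝ) + 1) ^ α
  symm : ∀ s, f (2*π - s) = f s
  f_zero : f 0 = 0
  deriv_zero : deriv f 0 = 0
  deriv2_zero : 0 < deriv (deriv f) 0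
  deriv_pos : ∀ σ ∈ Set.Ioo (0:ℝ) π, 0 < deriv f σ
  deriv_pi : deriv f π = 0
  deriv2_pi : deriv (deriv f) π < 0
  f_pi : 0 < f π

end

namespace SLProof

lemma fCoeff_sub_const (u : ℝ → ℝ) (hu : Continuous u) (l : ℝ) (k : ℤ) :
    fCoeff (fun θ => u θ - l) k = fCoeff u k - if k = 0 then (l : ℂ) else 0 := by
  have hpi : (π : ℂ) ≠ 0 := by exact_mod_cast Real.pi_ne_zero
  have h1 : ∫ θ in (0:ℝ)..(2*π), ((u θ - l : ℝ) : ℂ) * Complex.exp (-Complex.I * (k : ℂ) * (θ : ℂ))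
      = (∫ θ in (0:ℝ)..(2*π), (u θ : ℂ) * Complex.exp (-Complex.I * (k : ℂ) * (θ : ℂ)))
        - ∫ θ in (0:ℝ)..(2*π), (l : ℂ) * Complex.exp (-Complex.I * (k : ℂ) * (θ : ℂ)) := by
    rw [← intervalIntegral.integral_sub]
    · congr 1
      ext θ
      push_cast
      ring
    · exact Continuous.intervalIntegrable (by fun_prop) _ _
    · exact Continuous.intervalIntegrable (by fun_prop) _ _
  unfold fCoeff
  rw [h1, mul_sub, intervalIntegral.integral_const_mul]
  congr 1
  split_ifs with hk
  · subst hk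
    simp
    field_simp
  · have hc : -Complex.I * (k : ℂ) ≠ 0 := by
      simp [hk]
    rw [integral_exp_mul_complex hc]
    have : Complex.exp (-Complex.I * (k : ℂ) * ((2 * π : ℝ) : ℂ)) = 1 := by
      rw [Complex.exp_eq_one_iff]
      exact ⟨-k, by push_cast; ring⟩
    rw [this]
    simp

/-- The trigonometric polynomial with coefficients `z`. -/
noncomputable def trig {n : ℕ} (z : Fin n → ℂ) (θ : ℝ) : ℂ :=
  ∑ j, z j * Complex.exp (Complex.I * (j : ℂ) * (θ : ℂ))

lemma trig_cont {n : ℕ} (z : Fin n → ℂ) : Continuous (trig z) := by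
  unfold trig
  fun_prop

lemma sum_fCoeff {n : ℕ} (z : Fin n → ℂ) (w : ℝ → ℝ) (hw : Continuous w) (k : ℤ) :
    ∑ j : Fin n, fCoeff w (k - (j : ℤ)) * z j = (1 / (2 * (π : ℂ))) *
      ∫ θ in (0:ℝ)..(2*π), (w θ : ℂ) * trig z θ * Complex.exp (-Complex.I * (k : ℂ) * (θ : ℂ)) := by
  have : ∀ θ : ℝ, (w θ : ℂ) * trig z θ * Complex.exp (-Complex.I * (k : ℂ) * (θ : ℂ))
      = ∑ j : Fin n, ((w θ : ℂ) *
        Complex.exp (-Complex.I * ((k - (j : ℤ) : ℤ) : ℂ) * (θ : ℂ))) * z j := by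
    intro θ
    unfold trig
    rw [Finset.mul_sum, Finset.sum_mul]
    refine Finset.sum_congr rfl fun j _ => ?_
    have : Complex.exp (-Complex.I * ((k - (j : ℤ) : ℤ) : ℂ) * (θ : ℂ))
      = Complex.exp (Complex.I * (j : ℂ) * (θ : ℂ)) *
        Complex.exp (-Complex.I * (k : ℂ) * (θ : ℂ)) := by
      rw [← Complex.exp_add]
      congr 1
      push_cast
      ring
    rw [this]
    ring
  simp_rw [this]
  rw [intervalIntegral.integral_finsetSum]
  · rw [Finset.mul_sum]
    refine Finset.sum_congr rfl fun j _ => ?_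
    rw [intervalIntegral.integral_mul_const]
    unfold fCoeff
    ring
  · intro j _
    exact Continuous.intervalIntegrable (by fun_prop) _ _

lemma integral_conj {n : ℕ} (z : Fin n → ℂ) (w : ℝ → ℝ) (hw : Continuous w) (m : ℤ)
    (h : ∀ j : Fin n, ∫ θ in (0:ℝ)..(2*π), (w θ : ℂ) * trig z θ *
      Complex.exp (-Complex.I * ((m + (j : ℤ) : ℤ) : ℂ) * (θ : ℂ)) = 0) :
    ∫ θ in (0:ℝ)..(2*π), ((w θ * Complex.normSq (trig z θ) : ℝ) : ℂ) *
      Complex.exp (-Complex.I * (m : ℂ) * (θ : ℂ)) = 0 := by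
  have hc := trig_cont z
  have : ∀ θ : ℝ, ((w θ * Complex.normSq (trig z θ) : ℝ) : ℂ) *
      Complex.exp (-Complex.I * (m : ℂ) * (θ : ℂ)) = ∑ j : Fin n, (starRingEnd ℂ (z j)) *
        ((w θ : ℂ) * trig z θ * Complex.exp (-Complex.I * ((m + (j : ℤ) : ℤ) : ℂ) * (θ : ℂ))) := by
    intro θ
    have h2 : starRingEnd ℂ (trig z θ) =
        ∑ j : Fin n, starRingEnd ℂ (z j) * Complex.exp (-Complex.I * (j : ℂ) * (θ : ℂ)) := by
      unfold trig
      rw [map_sum]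
      refine Finset.sum_congr rfl fun j _ => ?_
      rw [map_mul, ← Complex.exp_conj]
      simp
    rw [Complex.ofReal_mul, ← Complex.mul_conj, h2, Finset.mul_sum, Finset.mul_sum, Finset.sum_mul]
    refine Finset.sum_congr rfl fun j _ => ?_
    have : Complex.exp (-Complex.I * ((m + (j : ℤ) : ℤ) : ℂ) * (θ : ℂ))
      = Complex.exp (-Complex.I * (j : ℂ) * (θ : ℂ)) *
        Complex.exp (-Complex.I * (m : ℂ) * (θ : ℂ)) := by
      rw [← Complex.exp_add]
      congr 1
      push_cast
      ring
    rw [this]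
    ring
  simp_rw [this]
  rw [intervalIntegral.integral_finsetSum]
  · refine Finset.sum_eq_zero fun j _ => ?_
    rw [intervalIntegral.integral_const_mul, h j, mul_zero]
  · intro j _
    exact Continuous.intervalIntegrable (by fun_prop) _ _

lemma trig_zero {n : ℕ} (z : Fin n → ℂ) (s : ℝ)
    (h : ∀ θ ∈ Set.Ioo (0:ℝ) π, θ ≠ s → trig z θ = 0) : z = 0 := by
  classical
  let p : Polynomial ℂ := ∑ j : Fin n, Polynomial.C (z j) * Polynomial.X ^ (j : ℕ)
  have hp : p = 0 := by
    apply Polynomial.eq_zero_of_infinite_isRoot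
    have hinf : (Set.Ioo (0:ℝ) π \ {s}).Infinite :=
      (Set.Ioo_infinite Real.pi_pos).sdiff (Set.finite_singleton s)
    have hinj : Set.InjOn (fun θ : ℝ => Complex.exp (Complex.I * (θ : ℂ)))
        (Set.Ioo (0:ℝ) π \ {s}) := by
      intro a ha b hb hab
      have h1 := congrArg Complex.re hab
      simp only [mul_comm Complex.I, Complex.exp_ofReal_mul_I_re] at h1
      exact Real.injOn_cos ⟨ha.1.1.le, ha.1.2.le⟩ ⟨hb.1.1.le, hb.1.2.le⟩ h1
    refine (hinf.image hinj).mono ?_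
    rintro _ ⟨θ, hθ, rfl⟩
    have h2 := h θ hθ.1 hθ.2
    simp only [Set.mem_ofPred_eq, Polynomial.IsRoot, p, Polynomial.eval_finsetSum,
      Polynomial.eval_mul, Polynomial.eval_C, Polynomial.eval_pow, Polynomial.eval_X]
    rw [← h2]
    unfold trig
    refine Finset.sum_congr rfl fun j _ => ?_
    rw [← Complex.exp_nat_mul]
    congr 2
    ring
  ext j
  have h3 := congrArg (fun q => Polynomial.coeff q (j : ℕ)) hp
  simp only [p, Polynomial.finsetSum_coeff, Polynomial.coeff_C_mul, Polynomial.coeff_X_pow,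
    Polynomial.coeff_zero] at h3
  rw [Finset.sum_eq_single j] at h3
  · simpa using h3
  · intro b _ hb
    have : (j : ℕ) ≠ b := fun e => hb (Fin.ext e.symm)
    simp [this]
  · simp

lemma strictMono {α : ℝ} {u : ℝ → ℝ} (hu : IsSimpleLoop α u) :
    StrictMonoOn u (Set.Icc 0 π) := by
  apply strictMonoOn_of_deriv_pos (convex_Icc _ _) hu.smooth.continuous.continuousOn
  intro x hx
  rw [interior_Icc] at hx
  exact hu.deriv_pos x hx

lemma exists_s {α : ℝ} {u : ℝ → ℝ} (hu : IsSimpleLoop α u) (l : ℝ) :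
    ∃ s ∈ Set.Icc (0:ℝ) π,
      (∀ θ ∈ Set.Icc (0:ℝ) π, θ < s → u θ < l) ∧ (∀ θ ∈ Set.Icc (0:ℝ) π, s < θ → l < u θ) := by
  have hm := strictMono hu
  have h0 : (0:ℝ) ∈ Set.Icc (0:ℝ) π := ⟨le_rfl, Real.pi_pos.le⟩
  have h1 : π ∈ Set.Icc (0:ℝ) π := ⟨Real.pi_pos.le, le_rfl⟩
  rcases le_total l (u 0) with h | h
  · exact ⟨0, h0, fun θ hθ h' => absurd hθ.1 (not_le.2 h'),
      fun θ hθ h' => h.trans_lt (hm h0 hθ h')⟩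
  rcases le_total (u π) l with h' | h'
  · exact ⟨π, h1, fun θ hθ h2 => (hm hθ h1 h2).trans_le h',
      fun θ hθ h2 => absurd hθ.2 (not_le.2 h2)⟩
  obtain ⟨s, hs, rfl⟩ :=
    intermediate_value_Icc Real.pi_pos.le hu.smooth.continuous.continuousOn ⟨h, h'⟩
  exact ⟨s, hs, fun θ hθ h2 => hm hθ hs h2, fun θ hθ h2 => hm hs hθ h2⟩

lemma key {α : ℝ} {u : ℝ → ℝ} (hu : IsSimpleLoop α u) (l : ℝ) {n : ℕ} (z : Fin n → ℂ)
    (h1 : ∀ k : ℕ, k ≤ n → ∑ j : Fin n, fCoeff (fun θ => u θ - l) ((k : ℤ) - (j : ℤ)) * z j = 0) :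
    z = 0 := by
  have hpi : (π : ℂ) ≠ 0 := by exact_mod_cast Real.pi_ne_zero
  have huc := hu.smooth.continuous
  have hwc : Continuous (fun θ => u θ - l) := by fun_prop
  have hzc := trig_cont z
  have h2 : ∀ k : ℕ, k ≤ n → ∫ θ in (0:ℝ)..(2*π), ((u θ - l : ℝ) : ℂ) * trig z θ *
      Complex.exp (-Complex.I * ((k : ℤ) : ℂ) * (θ : ℂ)) = 0 := by
    intro k hk
    have := h1 k hk
    rw [sum_fCoeff z _ hwc] at this
    rcases mul_eq_zero.1 this with h | h
    · simp [hpi] at h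
    · exact h
  have i0 := integral_conj z _ hwc 0 (fun j => by
    have := h2 j j.2.le
    simpa using this)
  have i1 := integral_conj z _ hwc 1 (fun j => by
    have := h2 (1 + j) (by omega)
    push_cast at this ⊢
    exact this)
  obtain ⟨s, hs, hlt, hgt⟩ := exists_s hu l
  let F : ℝ → ℝ := fun θ => (u θ - l) * Complex.normSq (trig z θ) * (Real.cos s - Real.cos θ)
  have hnc : Continuous fun θ => Complex.normSq (trig z θ) :=
    Complex.continuous_normSq.comp hzc
  have hFc : Continuous F := by fun_prop
  have hF : ∫ θ in (0:ℝ)..(2*π), F θ = 0 := by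
    let G : ℝ → ℂ := fun θ => (Real.cos s : ℂ) *
        (((u θ - l) * Complex.normSq (trig z θ) : ℝ) * Complex.exp (-Complex.I * ((0:ℤ) : ℂ) * (θ : ℂ)))
        - (((u θ - l) * Complex.normSq (trig z θ) : ℝ) * Complex.exp (-Complex.I * ((1:ℤ) : ℂ) * (θ : ℂ)))
    have hG : ∫ θ in (0:ℝ)..(2*π), G θ = 0 := by
      rw [intervalIntegral.integral_sub, intervalIntegral.integral_const_mul, i0, i1]
      · simp
      · exact Continuous.intervalIntegrable (by fun_prop) _ _
      · exact Continuous.intervalIntegrable (by fun_prop) _ _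
    have hGc : Continuous G := by fun_prop
    have hre : ∀ θ, F θ = Complex.reCLM (G θ) := by
      intro θ
      have e : -Complex.I * ((1:ℤ) : ℂ) * (θ : ℂ) = ((-θ : ℝ) : ℂ) * Complex.I := by
        push_cast; ring
      simp only [G, F, e, Complex.reCLM_apply, Complex.sub_re, Complex.re_ofReal_mul,
        Complex.exp_ofReal_mul_I_re, Real.cos_neg]
      simp
      ring
    simp_rw [hre]
    rw [ContinuousLinearMap.intervalIntegral_comp_comm _ (hGc.intervalIntegrable _ _), hG, map_zero]
  have hpos : ∀ θ ∈ Set.Icc (0:ℝ) π, 0 ≤ (u θ - l) * (Real.cos s - Real.cos θ) := by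
    intro θ hθ
    rcases lt_trichotomy θ s with h | h | h
    · exact mul_nonneg_of_nonpos_of_nonpos (by linarith [hlt θ hθ h])
        (by linarith [Real.strictAntiOn_cos hθ hs h])
    · simp [h]
    · exact mul_nonneg (by linarith [hgt θ hθ h])
        (by linarith [Real.strictAntiOn_cos hs hθ h])
  have hF0 : ∀ θ ∈ Set.Icc (0:ℝ) (2*π), 0 ≤ F θ := by
    intro θ hθ
    have : 0 ≤ (u θ - l) * (Real.cos s - Real.cos θ) := by
      rcases le_total θ π with h | h
      · exact hpos θ ⟨hθ.1, h⟩
      · have := hpos (2*π - θ) ⟨by linarith [hθ.2], by linarith⟩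
        rwa [hu.symm, Real.cos_two_pi_sub] at this
    have h3 := mul_nonneg this (Complex.normSq_nonneg (trig z θ))
    simp only [F]
    linarith
  apply trig_zero z s
  intro θ hθ hne
  by_contra hz
  have hθ' : θ ∈ Set.Icc (0:ℝ) π := ⟨hθ.1.le, hθ.2.le⟩
  have hn : 0 < Complex.normSq (trig z θ) := Complex.normSq_pos.2 hz
  have hFpos : 0 < F θ := by
    have : 0 < (u θ - l) * (Real.cos s - Real.cos θ) := by
      rcases lt_or_gt_of_ne hne with h | h
      · exact mul_pos_of_neg_of_neg (by linarith [hlt θ hθ' h])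
          (by linarith [Real.strictAntiOn_cos hθ' hs h])
      · exact mul_pos (by linarith [hgt θ hθ' h])
          (by linarith [Real.strictAntiOn_cos hs hθ' h])
    have h3 := mul_pos this hn
    simp only [F]
    linarith
  have h2pi : (0:ℝ) < 2 * π := by linarith [Real.pi_pos]
  have := intervalIntegral.integral_pos h2pi hFc.continuousOn
    (fun x hx => hF0 x ⟨hx.1.le, hx.2⟩) ⟨θ, ⟨hθ.1.le, by linarith [hθ.2, Real.pi_pos]⟩, hFpos⟩
  linarith

lemma key2 {α : ℝ} {u : ℝ → ℝ} (hu : IsSimpleLoop α u) (l : ℝ) {n : ℕ} (z : Fin n → ℂ)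
    (h1 : (toeplitz u n).mulVec z = (l : ℂ) • z)
    (h2 : ∑ j : Fin n, fCoeff u ((n : ℤ) - (j : ℤ)) * z j = 0) : z = 0 := by
  apply key hu l z
  intro k hk
  simp_rw [fCoeff_sub_const u hu.smooth.continuous, sub_mul, Finset.sum_sub_distrib]
  rcases hk.lt_or_eq with h | rfl
  · have h3 := congrFun h1 ⟨k, h⟩
    simp only [Matrix.mulVec, dotProduct, toeplitz, Matrix.of_apply, Pi.smul_apply,
      smul_eq_mul] at h3
    rw [h3, Finset.sum_eq_single (⟨k, h⟩ : Fin n)]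
    · simp
    · intro b _ hb
      have : (k : ℤ) - (b : ℤ) ≠ 0 := by
        intro e
        apply hb
        apply Fin.ext
        simp only
        omega
      rw [if_neg this, zero_mul]
    · simp
  · rw [h2, zero_sub, neg_eq_zero]
    refine Finset.sum_eq_zero fun j _ => ?_
    have : (k : ℤ) - (j : ℤ) ≠ 0 := by omega
    rw [if_neg this, zero_mul]

lemma simple {α : ℝ} {u : ℝ → ℝ} (hu : IsSimpleLoop α u) {n : ℕ}
    (hA : (toeplitz u n).IsHermitian) : Function.Injective hA.eigenvalues := by
  intro i j hij
  by_contra hne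
  let L : (Fin n → ℂ) → ℂ := fun z => ∑ k : Fin n, fCoeff u ((n : ℤ) - (k : ℤ)) * z k
  let x : Fin n → ℂ := ⇑(hA.eigenvectorBasis i)
  let y : Fin n → ℂ := ⇑(hA.eigenvectorBasis j)
  have hx : (toeplitz u n).mulVec x = (hA.eigenvalues i : ℂ) • x := by
    have := hA.mulVec_eigenvectorBasis i
    simpa using this
  have hy : (toeplitz u n).mulVec y = (hA.eigenvalues i : ℂ) • y := by
    have := hA.mulVec_eigenvectorBasis j
    rw [← hij] at this
    simpa using this
  have hcomb : ∀ a b : ℂ, a * L x + b * L y = 0 → a = 0 ∧ b = 0 := by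
    intro a b hab
    have h0 : a • x + b • y = 0 := by
      apply key2 hu (hA.eigenvalues i)
      · rw [Matrix.mulVec_add, Matrix.mulVec_smul, Matrix.mulVec_smul, hx, hy, smul_add,
          smul_comm a, smul_comm b]
      · rw [← hab]
        simp only [L, Finset.mul_sum]
        rw [← Finset.sum_add_distrib]
        refine Finset.sum_congr rfl fun k _ => ?_
        simp only [Pi.add_apply, Pi.smul_apply, smul_eq_mul]
        ring
    have h1 : a • hA.eigenvectorBasis i + b • hA.eigenvectorBasis j = 0 := by
      ext k
      simpa using congrFun h0 k
    have hli := hA.eigenvectorBasis.orthonormal.linearIndependent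
    exact (LinearIndepOn.pair_iff _ hne).1 (hli.linearIndepOn _) a b h1
  have h1 := hcomb (L y) (-L x) (by ring)
  have h2 := hcomb 1 0 (by simp [neg_eq_zero.1 h1.2])
  exact one_ne_zero h2.1

end SLProof

open Real in
/-- For all sufficiently large `n`, the eigenvalues of `T_n(f + h·g)` are pairwise distinct. -/
theorem eigenvalues_distinct (α : ℝ) (hα : 2 ≤ α) (f g : ℝ → ℝ)
    (hf : IsSimpleLoop α f) (hg : IsSimpleLoop α g)
    (hSL : ∀ n : ℕ, IsSimpleLoop α (fun θ => f θ + (1/(n+1:ℝ)) * g θ))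
    (hH : ∀ n : ℕ, (toeplitz (fun θ => f θ + (1/(n+1:ℝ)) * g θ) n).IsHermitian) :
    ∃ N : ℕ, ∀ n ≥ N, ∀ i j : Fin n, i < j →
      sortedEigs (hH n) i < sortedEigs (hH n) j := by
  refine ⟨0, fun n _ i j hij => ?_⟩
  have hinj := SLProof.simple (hSL n) (hH n)
  have hmono : Monotone (sortedEigs (hH n)) := Tuple.monotone_sort _
  refine lt_of_le_of_ne (hmono hij.le) fun h => hij.ne ?_
  exact (Tuple.sort (hH n).eigenvalues).injective (hinj h)
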